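/- Write n = n₁ + n₂ with n₁, n₂ ≥ 0. Let γ be a compact face of Γ and I ⊆ {1,…,n} such that ε = γ + ℝ_{≥0}^I is a face of Γ. Then σ_{γ,I} = σ(ε) is contained in ℝ_{≥0}^{n₁} × ℝ_{>0}^{n₂} if and only if I ⊆ {1,…,n₁}. -/

import Mathlib

/-!
The point is that a vector `a ∈ σ(ε)`, where `ε = γ + ℝ_{≥0}^I`, has zero set exactly `I`.
If `i ∈ I`, then `ε` is nonempty and stable under translation by `e_i`, while `⟨a, ·⟩` is constant
on it, so `a_i = 0` (`eq_zero_of_mem`). If `a_i = 0`, then the face `γ_a = ε` is stable under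
translation by `t e_i` for all `t ≥ 0`, because `Γ` is; but for `i ∉ I` the `i`-th coordinate on `ε`
is that of a point of the bounded set `γ`, so `i ∈ I` (`mem_of_eq_zero`). Since `ε` is itself a face,
`σ(ε)` is nonempty, and the equivalence follows by reading off coordinates.

Nonemptiness of faces (`faceAt_nonempty`) holds because a linear form with nonnegative
coefficients attains its minimum over `Γ` at a point of the finite set `S`.
-/

open Finset Set Pointwise

noncomputable section

/-- Standard inner product on `ℝ^n`. -/
def dotR {n : ℕ} (a b : Fin n → ℝ) : ℝ := ∑ i, a i * b i

/-- The nonnegative orthant `ℝ_{≥0}^n`. -/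
def nonnegOrthant (n : ℕ) : Set (Fin n → ℝ) := {x | ∀ i, 0 ≤ x i}

/-- Coercion of an integer lattice point to `ℝ^n`. -/
def natCastVec {n : ℕ} (α : Fin n → ℕ) : Fin n → ℝ := fun i => (α i : ℝ)

/-- The Newton polyhedron of a finite set `S ⊆ ℕ^n`: the convex hull of `S + ℝ_{≥0}^n`. -/
def newtonPolyhedron {n : ℕ} (S : Finset (Fin n → ℕ)) : Set (Fin n → ℝ) :=
  convexHull ℝ {x | ∃ α ∈ S, ∃ v ∈ nonnegOrthant n, x = natCastVec α + v}

/-- `l_Γ(a) = inf {⟨a,b⟩ : b ∈ Γ}`. -/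
def lGamma {n : ℕ} (S : Finset (Fin n → ℕ)) (a : Fin n → ℝ) : ℝ :=
  sInf ((fun b => dotR a b) '' newtonPolyhedron S)

/-- `γ_a = {b ∈ Γ : ⟨a,b⟩ = l_Γ(a)}`. -/
def faceAt {n : ℕ} (S : Finset (Fin n → ℕ)) (a : Fin n → ℝ) : Set (Fin n → ℝ) :=
  {b ∈ newtonPolyhedron S | dotR a b = lGamma S a}

/-- A face of `Γ` is a set of the form `γ_a` with `a ∈ ℝ_{≥0}^n`. -/
def IsFaceOf {n : ℕ} (S : Finset (Fin n → ℕ)) (γ : Set (Fin n → ℝ)) : Prop :=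
  ∃ a ∈ nonnegOrthant n, γ = faceAt S a

/-- A proper face is a face different from `Γ`. -/
def IsProperFaceOf {n : ℕ} (S : Finset (Fin n → ℕ)) (γ : Set (Fin n → ℝ)) : Prop :=
  IsFaceOf S γ ∧ γ ≠ newtonPolyhedron S

/-- `σ(γ) = {a ∈ ℝ_{≥0}^n : γ_a = γ}`. -/
def sigmaCone {n : ℕ} (S : Finset (Fin n → ℕ)) (γ : Set (Fin n → ℝ)) : Set (Fin n → ℝ) :=
  {a ∈ nonnegOrthant n | faceAt S a = γ}

/-- `σ̄(γ)`, the closure of `σ(γ)` in `ℝ^n`. -/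
def sigmaConeCl {n : ℕ} (S : Finset (Fin n → ℕ)) (γ : Set (Fin n → ℝ)) : Set (Fin n → ℝ) :=
  closure (sigmaCone S γ)

/-- `F` is a face of the closed convex cone `C`: `F = {x ∈ C | λ x = 0}` for a linear form
`λ` nonnegative on `C`. -/
def IsConeFaceOf {n : ℕ} (C F : Set (Fin n → ℝ)) : Prop :=
  ∃ lam : (Fin n → ℝ) →ₗ[ℝ] ℝ, (∀ x ∈ C, 0 ≤ lam x) ∧ F = {x ∈ C | lam x = 0}

/-- The dimension of a subset of `ℝ^n`: the dimension of its affine span. -/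
def dimSet {n : ℕ} (s : Set (Fin n → ℝ)) : ℕ :=
  Module.finrank ℝ (affineSpan ℝ s).direction

/-- `ℝ_{≥0}^I = {x ∈ ℝ_{≥0}^n : x_i = 0 for i ∉ I}`. -/
def orthantOn (n : ℕ) (I : Set (Fin n)) : Set (Fin n → ℝ) :=
  {x | (∀ i, 0 ≤ x i) ∧ ∀ i ∉ I, x i = 0}

/-- `ℝ_{≥0}^{n₁} × ℝ_{>0}^{n₂} = {a ∈ ℝ_{≥0}^n : a_i > 0 for i > n₁}`. -/
def mixedOrthant (n n₁ : ℕ) : Set (Fin n → ℝ) :=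
  {x | (∀ i, 0 ≤ x i) ∧ ∀ i : Fin n, n₁ ≤ (i : ℕ) → 0 < x i}

lemma dotR_add {n : ℕ} (a b c : Fin n → ℝ) : dotR a (b + c) = dotR a b + dotR a c :=
  dotProduct_add a b c

lemma dotR_smul {n : ℕ} (a : Fin n → ℝ) (c : ℝ) (b : Fin n → ℝ) :
    dotR a (c • b) = c • dotR a b :=
  dotProduct_smul c a b

lemma dotR_single {n : ℕ} (a : Fin n → ℝ) (i : Fin n) (t : ℝ) :
    dotR a (Pi.single i t) = a i * t :=
  dotProduct_single a t i

lemma single_mem_nonnegOrthant {n : ℕ} (i : Fin n) {t : ℝ} (ht : 0 ≤ t) :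
    (Pi.single i t : Fin n → ℝ) ∈ nonnegOrthant n :=
  fun j => (Pi.single_nonneg.mpr ht : (0 : Fin n → ℝ) ≤ Pi.single i t) j

/-- The Newton polyhedron is stable under translation by the nonnegative orthant. -/
lemma add_mem_newtonPolyhedron {n : ℕ} {S : Finset (Fin n → ℕ)} {b v : Fin n → ℝ}
    (hb : b ∈ newtonPolyhedron S) (hv : v ∈ nonnegOrthant n) :
    b + v ∈ newtonPolyhedron S := by
  have hsub : newtonPolyhedron S ⊆ (fun x => x + v) ⁻¹' newtonPolyhedron S := by
    refine convexHull_min ?_ ?_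
    · rintro _ ⟨α, hα, w, hw, rfl⟩
      exact subset_convexHull ℝ _ ⟨α, hα, w + v, fun i => add_nonneg (hw i) (hv i), add_assoc _ _ _⟩
    · exact (convex_convexHull ℝ _).translate_preimage_left v
  exact hsub hb

lemma faceAt_nonempty {n : ℕ} {S : Finset (Fin n → ℕ)} (hS : S.Nonempty) {a : Fin n → ℝ}
    (ha : a ∈ nonnegOrthant n) : (faceAt S a).Nonempty := by
  obtain ⟨α, hα, hmin⟩ := S.exists_min_image (fun α => dotR a (natCastVec α)) hS
  have hmem : natCastVec α ∈ newtonPolyhedron S :=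
    subset_convexHull ℝ _ ⟨α, hα, 0, fun _ => le_rfl, (add_zero _).symm⟩
  have hle : newtonPolyhedron S ⊆ {b | dotR a (natCastVec α) ≤ dotR a b} := by
    refine convexHull_min ?_ ?_
    · rintro _ ⟨β, hβ, v, hv, rfl⟩
      have hav : 0 ≤ dotR a v := Finset.sum_nonneg fun i _ => mul_nonneg (ha i) (hv i)
      have := hmin β hβ
      simp only [Set.mem_ofPred_eq, dotR_add]
      linarith
    · exact convex_halfSpace_ge
        (IsLinearMap.mk (dotR_add a) (dotR_smul a)) _
  have hleast : IsLeast ((fun b => dotR a b) '' newtonPolyhedron S) (dotR a (natCastVec α)) :=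
    ⟨⟨_, hmem, rfl⟩, by rintro _ ⟨b, hb, rfl⟩; exact hle hb⟩
  exact ⟨_, hmem, hleast.csInf_eq.symm⟩

/-- A face containing a ray in direction `e_i` has supporting vectors vanishing at `i`. -/
lemma eq_zero_of_mem {n : ℕ} {S : Finset (Fin n → ℕ)} {γ : Set (Fin n → ℝ)}
    {I : Set (Fin n)} {a : Fin n → ℝ} (hγ : γ.Nonempty)
    (ha : faceAt S a = γ + orthantOn n I) {i : Fin n} (hi : i ∈ I) : a i = 0 := by
  obtain ⟨b, hb⟩ := hγ
  have h0 : b + 0 ∈ faceAt S a :=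
    ha ▸ Set.add_mem_add hb ⟨fun _ => le_rfl, fun _ _ => rfl⟩
  have h1 : b + Pi.single i 1 ∈ faceAt S a := by
    refine ha ▸ Set.add_mem_add hb ⟨single_mem_nonnegOrthant i zero_le_one, fun j hj => ?_⟩
    exact Pi.single_eq_of_ne (by rintro rfl; exact hj hi) _
  have e0 := h0.2
  have e1 := h1.2
  rw [add_zero] at e0
  rw [dotR_add, dotR_single] at e1
  linarith

/-- A supporting vector vanishing at `i` forces the face to be unbounded in direction `e_i`; when
the face is `γ + ℝ_{≥0}^I` with `γ` bounded, this is only possible for `i ∈ I`. -/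
lemma mem_of_eq_zero {n : ℕ} {S : Finset (Fin n → ℕ)} {γ : Set (Fin n → ℝ)}
    (hγc : Bornology.IsBounded γ) {I : Set (Fin n)} {a : Fin n → ℝ}
    (hne : (faceAt S a).Nonempty) (ha : faceAt S a = γ + orthantOn n I)
    {i : Fin n} (hi : a i = 0) : i ∈ I := by
  by_contra hiI
  obtain ⟨b, hb, hab⟩ := hne
  obtain ⟨C, hC⟩ := hγc.exists_norm_le
  -- Chosen so that `b i + t ≥ |C| + 1` exceeds every `i`-th coordinate on `γ`.
  set t : ℝ := |C| + 1 + |b i| with ht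
  have ht0 : 0 ≤ t := by positivity
  have hmem : b + Pi.single i t ∈ γ + orthantOn n I := by
    rw [← ha]
    refine ⟨add_mem_newtonPolyhedron hb (single_mem_nonnegOrthant i ht0), ?_⟩
    rw [dotR_add, dotR_single, hi, zero_mul, add_zero, hab]
  obtain ⟨g, hg, v, hv, hgv⟩ := hmem
  have hcoord := congrFun hgv i
  simp only [Pi.add_apply, Pi.single_eq_same, hv.2 i hiI, add_zero] at hcoord
  have h1 : g i ≤ C := (Real.le_norm_self _).trans ((norm_le_pi_norm g i).trans (hC g hg))
  have h2 := neg_abs_le (b i)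
  have h3 := le_abs_self C
  linarith

theorem sigmaCone_leant_subset_mixedOrthant_iff {n n₁ n₂ : ℕ} (hn : 1 ≤ n)
    (hn12 : n = n₁ + n₂)
    (S : Finset (Fin n → ℕ)) (hS : S.Nonempty) (hS0 : (0 : Fin n → ℕ) ∉ S)
    (γ : Set (Fin n → ℝ)) (hγ : IsFaceOf S γ) (hγc : Bornology.IsBounded γ)
    (I : Set (Fin n)) (hI : IsFaceOf S (γ + orthantOn n I)) :
    sigmaCone S (γ + orthantOn n I) ⊆ mixedOrthant n n₁ ↔
      I ⊆ {i : Fin n | (i : ℕ) < n₁} := by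
  obtain ⟨c, hc, rfl⟩ := hγ
  have hγne := faceAt_nonempty hS hc
  constructor
  · intro h i hi
    obtain ⟨a, ha, hε⟩ := hI
    by_contra hlt
    have hpos := (h ⟨ha, hε.symm⟩).2 i (not_lt.mp hlt)
    exact hpos.ne' (eq_zero_of_mem hγne hε.symm hi)
  · rintro h a ⟨ha, hε⟩
    refine ⟨ha, fun i hi => lt_of_le_of_ne (ha i) fun h0 => ?_⟩
    exact hi.not_gt (h (mem_of_eq_zero hγc (faceAt_nonempty hS ha) hε h0.symm))
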